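/- arXiv:2002.02123 — 5 statements merged into one kernel-verified Lean document; each statement's English description precedes it below -/
import Mathlib

section
/- For all real numbers A > 0 and B > 0, the supremum over w ∈ ℝ of the quantity w² / ((√A − w)² + B) equals 1 + A/B. -/
/-- For all real `A > 0` and `B > 0`, the supremum over `w ∈ ℝ` of
`w² / ((√A − w)² + B)` equals `1 + A/B`. -/
theorem stmt_0 (A B : ℝ) (hA : 0 < A) (hB : 0 < B) :
    (⨆ w : ℝ, w ^ 2 / ((Real.sqrt A - w) ^ 2 + B)) = 1 + A / B := by
  obtain ⟨s, hs, hsA⟩ : ∃ s : ℝ, 0 < s ∧ Real.sqrt A = s :=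
    ⟨_, Real.sqrt_pos.mpr hA, rfl⟩
  have hA2 : A = s ^ 2 := by rw [← hsA, Real.sq_sqrt hA.le]
  rw [hsA, hA2]
  have hub : ∀ w : ℝ, w ^ 2 / ((s - w) ^ 2 + B) ≤ 1 + s ^ 2 / B := by
    intro w
    have h1 : 1 + s ^ 2 / B = (B + s ^ 2) / B := by field_simp
    rw [h1, div_le_div_iff₀ (by positivity) hB]
    nlinarith [sq_nonneg (s ^ 2 + B - s * w)]
  apply le_antisymm (ciSup_le hub)
  have hval : ((s ^ 2 + B) / s) ^ 2 / ((s - (s ^ 2 + B) / s) ^ 2 + B) = 1 + s ^ 2 / B := by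
    have h2 : s - (s ^ 2 + B) / s = -(B / s) := by field_simp; ring
    have h3 : (-(B / s)) ^ 2 + B = B * (B + s ^ 2) / s ^ 2 := by field_simp
    rw [h2, h3]
    have : B + s ^ 2 ≠ 0 := by positivity
    field_simp
    ring
  rw [← hval]
  exact le_ciSup (f := fun w : ℝ => w ^ 2 / ((s - w) ^ 2 + B))
    ⟨1 + s ^ 2 / B, by rintro _ ⟨w, rfl⟩; exact hub w⟩ ((s ^ 2 + B) / s)
end

section
/- For all real numbers A > 0 and B > 0, the function f(w) = w² / ((√A − w)² + B) on ℝ satisfies f(w*) = 1 + A/B at w* = (A + B)/√A, and f(w) < 1 + A/B for every real w ≠ w*; that is, w* = (A + B)/√A is the unique global maximizer of f. -/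
/-- For `A, B > 0`, the function `f(w) = w² / ((√A − w)² + B)` attains the value
`1 + A/B` at `w* = (A + B)/√A`, and `f(w) < 1 + A/B` for every `w ≠ w*`. -/
theorem stmt_1 (A B : ℝ) (hA : 0 < A) (hB : 0 < B) :
    ((A + B) / Real.sqrt A) ^ 2 / ((Real.sqrt A - (A + B) / Real.sqrt A) ^ 2 + B)
      = 1 + A / B ∧
    ∀ w : ℝ, w ≠ (A + B) / Real.sqrt A →
      w ^ 2 / ((Real.sqrt A - w) ^ 2 + B) < 1 + A / B := by
  obtain ⟨s, hs, rfl⟩ : ∃ s : ℝ, 0 < s ∧ A = s ^ 2 :=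
    ⟨Real.sqrt A, Real.sqrt_pos.2 hA, (Real.sq_sqrt hA.le).symm⟩
  rw [Real.sqrt_sq hs.le]
  constructor
  · have h1 : s - (s ^ 2 + B) / s = -B / s := by
      field_simp
      ring
    have h2 : (-B / s) ^ 2 + B = B * (s ^ 2 + B) / s ^ 2 := by
      field_simp
      ring
    have h3 : s ^ 2 + B ≠ 0 := by positivity
    rw [h1, h2]
    field_simp
    ring
  · intro w hw
    have hd : 0 < (s - w) ^ 2 + B := by positivity
    have hne : s * w - (s ^ 2 + B) ≠ 0 := by
      intro h
      apply hw
      rw [eq_div_iff hs.ne']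
      linarith
    have hp : 0 < (s * w - (s ^ 2 + B)) ^ 2 := by positivity
    have h1 : 1 + s ^ 2 / B = (s ^ 2 + B) / B := by
      field_simp
      ring
    rw [h1, div_lt_div_iff₀ hd hB]
    nlinarith [hp]
end

section
/- Let S be a nonempty set and let A, B : S → ℝ satisfy A(t) > 0 and B(t) > 0 for all t ∈ S. Then a pair (t₀, w₀) ∈ S × ℝ is a global maximizer of the function (t, w) ↦ w² / ((√(A(t)) − w)² + B(t)) over S × ℝ if and only if t₀ is a global maximizer of t ↦ 1 + A(t)/B(t) over S and w₀ = (A(t₀) + B(t₀))/√(A(t₀)); moreover, in that case the two maximum values coincide. -/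
theorem qt_key (a b w : ℝ) (ha : 0 < a) (hb : 0 < b) :
    (1 + a / b) - w ^ 2 / ((Real.sqrt a - w) ^ 2 + b)
      = (Real.sqrt a * w - (a + b)) ^ 2 / (b * ((Real.sqrt a - w) ^ 2 + b)) := by
  obtain ⟨s, hs, hsa⟩ : ∃ s, s = Real.sqrt a ∧ a = s ^ 2 :=
    ⟨_, rfl, (Real.sq_sqrt ha.le).symm⟩
  rw [← hs, hsa]
  have hD : (s - w) ^ 2 + b ≠ 0 := by positivity
  have hb' : b ≠ 0 := hb.ne'
  rw [eq_div_iff (mul_ne_zero hb' hD)]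
  field_simp
  ring

theorem qt_le (a b w : ℝ) (ha : 0 < a) (hb : 0 < b) :
    w ^ 2 / ((Real.sqrt a - w) ^ 2 + b) ≤ 1 + a / b := by
  have h := qt_key a b w ha hb
  have : 0 ≤ (Real.sqrt a * w - (a + b)) ^ 2 / (b * ((Real.sqrt a - w) ^ 2 + b)) := by
    positivity
  linarith

theorem qt_eq_iff (a b w : ℝ) (ha : 0 < a) (hb : 0 < b) :
    w ^ 2 / ((Real.sqrt a - w) ^ 2 + b) = 1 + a / b ↔ w = (a + b) / Real.sqrt a := by
  have h := qt_key a b w ha hb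
  have hD : b * ((Real.sqrt a - w) ^ 2 + b) ≠ 0 := by positivity
  have hs : Real.sqrt a ≠ 0 := (Real.sqrt_pos.2 ha).ne'
  rw [eq_div_iff hs, eq_comm, ← sub_eq_zero, h, div_eq_zero_iff, or_iff_left hD,
    sq_eq_zero_iff, sub_eq_zero, mul_comm]

/-- Equivalence of global maximizers for the quadratic transform:
`(t₀, w₀)` globally maximizes `(t, w) ↦ w² / ((√(A t) − w)² + B t)` over `S × ℝ`
iff `t₀` globally maximizes `t ↦ 1 + A t / B t` over `S` and
`w₀ = (A t₀ + B t₀)/√(A t₀)`; moreover the two maximum values then coincide. -/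
theorem stmt_2 {S : Type*} [Nonempty S] (A B : S → ℝ)
    (hA : ∀ t, 0 < A t) (hB : ∀ t, 0 < B t) (t₀ : S) (w₀ : ℝ) :
    ((∀ t : S, ∀ w : ℝ,
        w ^ 2 / ((Real.sqrt (A t) - w) ^ 2 + B t)
          ≤ w₀ ^ 2 / ((Real.sqrt (A t₀) - w₀) ^ 2 + B t₀)) ↔
      ((∀ t : S, 1 + A t / B t ≤ 1 + A t₀ / B t₀) ∧
        w₀ = (A t₀ + B t₀) / Real.sqrt (A t₀))) ∧
    ((∀ t : S, ∀ w : ℝ,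
        w ^ 2 / ((Real.sqrt (A t) - w) ^ 2 + B t)
          ≤ w₀ ^ 2 / ((Real.sqrt (A t₀) - w₀) ^ 2 + B t₀)) →
      w₀ ^ 2 / ((Real.sqrt (A t₀) - w₀) ^ 2 + B t₀) = 1 + A t₀ / B t₀) := by
  have main : (∀ t : S, ∀ w : ℝ,
        w ^ 2 / ((Real.sqrt (A t) - w) ^ 2 + B t)
          ≤ w₀ ^ 2 / ((Real.sqrt (A t₀) - w₀) ^ 2 + B t₀)) →
      w₀ ^ 2 / ((Real.sqrt (A t₀) - w₀) ^ 2 + B t₀) = 1 + A t₀ / B t₀ := by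
    intro h
    refine le_antisymm (qt_le _ _ _ (hA _) (hB _)) ?_
    rw [← (qt_eq_iff (A t₀) (B t₀) _ (hA _) (hB _)).2 rfl]
    exact h _ _
  refine ⟨⟨fun h => ⟨fun t => ?_, (qt_eq_iff _ _ _ (hA _) (hB _)).1 (main h)⟩, ?_⟩, main⟩
  · rw [← main h, ← (qt_eq_iff (A t) (B t) _ (hA _) (hB _)).2 rfl]
    exact h _ _
  · rintro ⟨h1, h2⟩ t w
    rw [(qt_eq_iff _ _ _ (hA _) (hB _)).2 h2]
    exact (qt_le _ _ _ (hA _) (hB _)).trans (h1 t)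
end

section
/- Let n, K ∈ ℕ, let P > 0 be real, and for each k ∈ {1, …, K} let μ_k ≥ 0 and l_k > 0 be reals, w_k ≥ 0 a real, and d_k, q_k ∈ ℝⁿ vectors with nonnegative entries. Then the function G(t) = −Σ_{k=1}^{K} μ_k (l_k/ln 2) [ (√(P ⟨t, d_k⟩) − w_k)² + 1 + P ⟨t, q_k⟩ ] is concave on the set {t ∈ ℝⁿ : 0 ≤ t_v ≤ 1 for all v}. -/
open Finset in
/-- Concavity of the transformed weighted sum-rate objective
`G(t) = −Σ_k μ_k (l_k/ln 2)[(√(P⟨t,d_k⟩) − w_k)² + 1 + P⟨t,q_k⟩]`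
on the box `{t : 0 ≤ t_v ≤ 1}`. -/
theorem stmt_5 (n K : ℕ) (P : ℝ) (hP : 0 < P)
    (μ l w : Fin K → ℝ) (d q : Fin K → Fin n → ℝ)
    (hμ : ∀ k, 0 ≤ μ k) (hl : ∀ k, 0 < l k) (hw : ∀ k, 0 ≤ w k)
    (hd : ∀ k v, 0 ≤ d k v) (hq : ∀ k v, 0 ≤ q k v) :
    ConcaveOn ℝ {t : Fin n → ℝ | ∀ v, 0 ≤ t v ∧ t v ≤ 1}
      (fun t : Fin n → ℝ =>
        -∑ k : Fin K, μ k * (l k / Real.log 2) *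
          ((Real.sqrt (P * ∑ v : Fin n, t v * d k v) - w k) ^ 2 + 1 +
            P * ∑ v : Fin n, t v * q k v)) := by
  have hlin : ∀ (c : Fin n → ℝ) (x y : Fin n → ℝ) (a b : ℝ),
      P * ∑ v : Fin n, (a • x + b • y) v * c v =
        a * (P * ∑ v : Fin n, x v * c v) + b * (P * ∑ v : Fin n, y v * c v) := by
    intro c x y a b
    simp only [Pi.add_apply, Pi.smul_apply, smul_eq_mul, Finset.mul_sum]
    rw [← Finset.sum_add_distrib]
    exact Finset.sum_congr rfl fun v _ => by ring
  refine ⟨?_, ?_⟩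
  · intro x hx y hy a b ha hb hab v
    have h1 := hx v
    have h2 := hy v
    simp only [Pi.add_apply, Pi.smul_apply, smul_eq_mul]
    constructor
    · have := mul_nonneg ha h1.1
      have := mul_nonneg hb h2.1
      linarith
    · have := mul_le_mul_of_nonneg_left h1.2 ha
      have := mul_le_mul_of_nonneg_left h2.2 hb
      linarith
  · intro x hx y hy a b ha hb hab
    simp only [hlin, smul_eq_mul]
    rw [mul_neg, mul_neg, ← neg_add, neg_le_neg_iff, Finset.mul_sum, Finset.mul_sum,
      ← Finset.sum_add_distrib]
    refine Finset.sum_le_sum fun k _ => ?_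
    have hA : 0 ≤ P * ∑ v : Fin n, x v * d k v :=
      mul_nonneg hP.le (Finset.sum_nonneg fun v _ => mul_nonneg (hx v).1 (hd k v))
    have hB : 0 ≤ P * ∑ v : Fin n, y v * d k v :=
      mul_nonneg hP.le (Finset.sum_nonneg fun v _ => mul_nonneg (hy v).1 (hd k v))
    generalize P * ∑ v : Fin n, x v * d k v = A at *
    generalize P * ∑ v : Fin n, y v * d k v = B at *
    generalize P * ∑ v : Fin n, x v * q k v = C
    generalize P * ∑ v : Fin n, y v * q k v = D
    have hc : 0 ≤ μ k * (l k / Real.log 2) :=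
      mul_nonneg (hμ k) (div_nonneg (hl k).le (Real.log_nonneg (by norm_num)))
    have hs := Real.strictConcaveOn_sqrt.concaveOn.2 (x := A) hA (y := B) hB ha hb hab
    simp only [smul_eq_mul] at hs
    have hAB : 0 ≤ a * A + b * B := add_nonneg (mul_nonneg ha hA) (mul_nonneg hb hB)
    have e1 := Real.sq_sqrt hA
    have e2 := Real.sq_sqrt hB
    have e3 := Real.sq_sqrt hAB
    have hm := mul_le_mul_of_nonneg_left hs (hw k)
    have key : (√(a * A + b * B) - w k) ^ 2 + 1 + (a * C + b * D) ≤
        a * ((√A - w k) ^ 2 + 1 + C) + b * ((√B - w k) ^ 2 + 1 + D) := by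
      have hb' : b = 1 - a := by linarith
      have f1 : (√(a * A + b * B) - w k) ^ 2 =
        a * A + b * B - 2 * (w k * √(a * A + b * B)) + w k ^ 2 := by rw [sub_sq, e3]; ring
      have f2 : (√A - w k) ^ 2 = A - 2 * (w k * √A) + w k ^ 2 := by rw [sub_sq, e1]; ring
      have f3 : (√B - w k) ^ 2 = B - 2 * (w k * √B) + w k ^ 2 := by rw [sub_sq, e2]; ring
      rw [f1, f2, f3]
      have g : (a + b) * (w k ^ 2 + 1) = w k ^ 2 + 1 := by rw [hab, one_mul]
      linarith
    calc _ ≤ _ := mul_le_mul_of_nonneg_left key hc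
      _ = _ := by ring
end

section
/- For all real numbers A > 0 and B > 0, the supremum over pairs (w, l) ∈ (0, ∞) × (0, ∞) of the quantity log₂(w²) + log₂ l − (l/ln 2)·((√A − w)² + B) equals log₂(1 + A/B) − 1/ln 2. -/
theorem stmt_10_ub (s B w l : ℝ) (hB : 0 < B) (hw : 0 < w) (hl : 0 < l) :
    Real.logb 2 (w ^ 2) + Real.logb 2 l - (l / Real.log 2) * ((s - w) ^ 2 + B)
      ≤ Real.logb 2 (1 + s ^ 2 / B) - 1 / Real.log 2 := by
  have h2 : 0 < Real.log 2 := Real.log_pos (by norm_num)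
  have hK : 0 < 1 + s ^ 2 / B := by positivity
  have h1 : w ^ 2 / (1 + s ^ 2 / B) ≤ (s - w) ^ 2 + B := by
    rw [div_le_iff₀ hK]
    have : ((s - w) ^ 2 + B) * (1 + s ^ 2 / B) - w ^ 2 = (s * (s - w) + B) ^ 2 / B := by
      field_simp
      ring
    have h3 : 0 ≤ (s * (s - w) + B) ^ 2 / B := by positivity
    linarith
  have h3 := Real.log_le_sub_one_of_pos (x := w ^ 2 * l / (1 + s ^ 2 / B)) (by positivity)
  rw [Real.log_div (by positivity) hK.ne', Real.log_mul (by positivity) hl.ne'] at h3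
  have h4 : w ^ 2 * l / (1 + s ^ 2 / B) ≤ l * ((s - w) ^ 2 + B) := by
    calc _ = l * (w ^ 2 / (1 + s ^ 2 / B)) := by ring
      _ ≤ _ := mul_le_mul_of_nonneg_left h1 hl.le
  unfold Real.logb
  have e : ∀ a b c : ℝ, a / Real.log 2 + b / Real.log 2 - l / Real.log 2 * c
      = (a + b - l * c) / Real.log 2 := by intros; ring
  rw [e, ← sub_div]
  apply div_le_div_of_nonneg_right _ h2.le
  linarith

theorem stmt_10_at (s B : ℝ) (hs : 0 < s) (hB : 0 < B) :
    Real.logb 2 (((s ^ 2 + B) / s) ^ 2) + Real.logb 2 (s ^ 2 / (B * (s ^ 2 + B)))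
      - ((s ^ 2 / (B * (s ^ 2 + B))) / Real.log 2) * ((s - (s ^ 2 + B) / s) ^ 2 + B)
      = Real.logb 2 (1 + s ^ 2 / B) - 1 / Real.log 2 := by
  rw [← Real.logb_mul (by positivity) (by positivity)]
  have e1 : ((s ^ 2 + B) / s) ^ 2 * (s ^ 2 / (B * (s ^ 2 + B))) = 1 + s ^ 2 / B := by
    field_simp
    ring
  have e2 : (s ^ 2 / (B * (s ^ 2 + B))) * ((s - (s ^ 2 + B) / s) ^ 2 + B) = 1 := by
    field_simp
    ring
  rw [e1, div_mul_eq_mul_div, e2]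


/-- For `A, B > 0`, the supremum over pairs `(w, l) ∈ (0,∞) × (0,∞)` of
`log₂(w²) + log₂ l − (l/ln 2)·((√A − w)² + B)` equals `log₂(1 + A/B) − 1/ln 2`. -/
theorem stmt_10 (A B : ℝ) (hA : 0 < A) (hB : 0 < B) :
    (⨆ p : Set.Ioi (0 : ℝ) × Set.Ioi (0 : ℝ),
        (Real.logb 2 ((p.1 : ℝ) ^ 2) + Real.logb 2 (p.2 : ℝ)
          - ((p.2 : ℝ) / Real.log 2) * ((Real.sqrt A - (p.1 : ℝ)) ^ 2 + B)))
      = Real.logb 2 (1 + A / B) - 1 / Real.log 2 := by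

  obtain ⟨s, hs, rfl⟩ : ∃ s : ℝ, 0 < s ∧ A = s ^ 2 :=
    ⟨Real.sqrt A, Real.sqrt_pos.2 hA, (Real.sq_sqrt hA.le).symm⟩
  rw [Real.sqrt_sq hs.le]
  haveI : Nonempty (Set.Ioi (0 : ℝ) × Set.Ioi (0 : ℝ)) :=
    ⟨(⟨1, Set.mem_Ioi.2 one_pos⟩, ⟨1, Set.mem_Ioi.2 one_pos⟩)⟩
  have hub := fun p : Set.Ioi (0 : ℝ) × Set.Ioi (0 : ℝ) =>
    stmt_10_ub s B p.1 p.2 hB p.1.2 p.2.2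
  apply le_antisymm (ciSup_le hub)
  rw [← stmt_10_at s B hs hB]
  exact le_ciSup (f := fun p : Set.Ioi (0 : ℝ) × Set.Ioi (0 : ℝ) =>
    (Real.logb 2 ((p.1 : ℝ) ^ 2) + Real.logb 2 (p.2 : ℝ)
          - ((p.2 : ℝ) / Real.log 2) * ((s - (p.1 : ℝ)) ^ 2 + B)))
    ⟨_, Set.forall_mem_range.2 hub⟩
    (⟨(s ^ 2 + B) / s, Set.mem_Ioi.2 (by positivity)⟩,
      ⟨s ^ 2 / (B * (s ^ 2 + B)), Set.mem_Ioi.2 (by positivity)⟩)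
end
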